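/- arXiv:1809.10607 — 7 statements merged into one kernel-verified Lean document; each statement's English description precedes it below -/
import Mathlib

section
/- Let f(x) = ∑_{n=0}^∞ a_n x^n and g(x) = ∑_{n=0}^∞ b_n x^n be power series with real coefficients a_n, b_n and radii of convergence R > 0 and R' > 0 respectively, and let h(x) = ∑_{n=0}^∞ a_n b_n x^n. Then for all real u, v with |u| < R and |v| < R', one has h(uv) = (1/(2π)) ∫_0^{2π} f(u e^{it}) g(v e^{-it}) dt, where on the right f and g denote the complex power series ∑ a_n z^n and ∑ b_n z^n evaluated at the complex points u e^{it} and v e^{-it}, and the integral is a complex integral (whose value is the real number h(uv)). -/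
/-!
The product of the two absolutely convergent series is an absolutely convergent double series of
terms `aₘ uᵐ bₙ vⁿ e^{i(m-n)t}`, dominated by `|aₘ uᵐ| |bₙ vⁿ|` uniformly in `t`. It may therefore
be integrated term by term over `[0, 2π]`; by orthogonality of the characters `e^{ikt}`
(`integral_character`) only the diagonal terms `m = n` survive, each contributing
`2π aₙ bₙ (uv)ⁿ`.
-/

open Real Complex intervalIntegral

/-- Orthogonality of the characters of the circle, for the frequency `m - n`. -/
lemma integral_character (m n : ℕ) :
    ∫ t in (0:ℝ)..(2 * Real.pi),
      Complex.exp (Complex.I * t) ^ m * Complex.exp (-Complex.I * t) ^ n =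
      if m = n then 2 * (Real.pi : ℂ) else 0 := by
  have hterm : ∀ t : ℝ, Complex.exp (Complex.I * t) ^ m * Complex.exp (-Complex.I * t) ^ n =
      Complex.exp (((m : ℂ) - n) * Complex.I * t) := by
    intro t
    rw [← Complex.exp_nat_mul, ← Complex.exp_nat_mul, ← Complex.exp_add]
    congr 1
    ring
  simp_rw [hterm]
  split_ifs with h
  · simp [h]
  · have hc : ((m : ℂ) - n) * Complex.I ≠ 0 :=
      mul_ne_zero (sub_ne_zero.mpr (by exact_mod_cast h)) Complex.I_ne_zero
    rw [integral_exp_mul_complex hc]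
    have hper : Complex.exp (((m : ℂ) - n) * Complex.I * ((2 * Real.pi : ℝ) : ℂ)) = 1 := by
      rw [Complex.exp_eq_one_iff]
      exact ⟨(m : ℤ) - n, by push_cast; ring⟩
    rw [hper]
    simp

/-- Bessel–Parseval type identity for the Hadamard product of two power series:
if `f(x) = ∑ aₙ xⁿ` and `g(x) = ∑ bₙ xⁿ` have real coefficients and converge on the
complex disks of radii `R > 0` and `R' > 0` respectively, then for real `u, v` with
`|u| < R` and `|v| < R'`,
`∑ aₙ bₙ (uv)ⁿ = (1/(2π)) ∫₀^{2π} f(u e^{it}) g(v e^{-it}) dt`. -/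
theorem hadamard_product_integral
    (a b : ℕ → ℝ) (R R' : ℝ) (hR : 0 < R) (hR' : 0 < R')
    (ha : ∀ z : ℂ, ‖z‖ < R → Summable fun n : ℕ => (a n : ℂ) * z ^ n)
    (hb : ∀ z : ℂ, ‖z‖ < R' → Summable fun n : ℕ => (b n : ℂ) * z ^ n)
    (u v : ℝ) (hu : |u| < R) (hv : |v| < R') :
    ((∑' n : ℕ, a n * b n * (u * v) ^ n : ℝ) : ℂ) =
      (1 / (2 * Real.pi)) *
        ∫ t in (0:ℝ)..(2 * Real.pi),
          (∑' n : ℕ, (a n : ℂ) * ((u : ℂ) * Complex.exp (Complex.I * t)) ^ n) *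
          (∑' n : ℕ, (b n : ℂ) * ((v : ℂ) * Complex.exp (-Complex.I * t)) ^ n) := by
  -- Over `ℂ` unconditional summability is absolute summability.
  have hA : Summable fun n : ℕ => ‖(a n : ℂ) * (u : ℂ) ^ n‖ :=
    (ha u (by simpa using hu)).norm
  have hB : Summable fun n : ℕ => ‖(b n : ℂ) * (v : ℂ) ^ n‖ :=
    (hb v (by simpa using hv)).norm
  have hnorm : ∀ t : ℝ, ‖Complex.exp (Complex.I * t)‖ = 1 := fun t => by
    rw [mul_comm]; exact Complex.norm_exp_ofReal_mul_I t
  have hnorm' : ∀ t : ℝ, ‖Complex.exp (-Complex.I * t)‖ = 1 := fun t => by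
    simpa [mul_comm] using Complex.norm_exp_ofReal_mul_I (-t)
  have hAt : ∀ (t : ℝ) (n : ℕ), ‖(a n : ℂ) * ((u : ℂ) * Complex.exp (Complex.I * t)) ^ n‖ =
      ‖(a n : ℂ) * (u : ℂ) ^ n‖ := fun t n => by
    rw [mul_pow, ← mul_assoc, norm_mul, norm_pow (Complex.exp _), hnorm, one_pow, mul_one]
  have hBt : ∀ (t : ℝ) (n : ℕ), ‖(b n : ℂ) * ((v : ℂ) * Complex.exp (-Complex.I * t)) ^ n‖ =
      ‖(b n : ℂ) * (v : ℂ) ^ n‖ := fun t n => by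
    rw [mul_pow, ← mul_assoc, norm_mul, norm_pow (Complex.exp _), hnorm', one_pow, mul_one]
  have hAB : Summable fun p : ℕ × ℕ =>
      ‖(a p.1 : ℂ) * (u : ℂ) ^ p.1‖ * ‖(b p.2 : ℂ) * (v : ℂ) ^ p.2‖ :=
    hA.mul_of_nonneg hB (fun _ => norm_nonneg _) (fun _ => norm_nonneg _)
  have hprod : ∀ t : ℝ, HasSum (fun p : ℕ × ℕ =>
      ((a p.1 : ℂ) * ((u : ℂ) * Complex.exp (Complex.I * t)) ^ p.1) *
      ((b p.2 : ℂ) * ((v : ℂ) * Complex.exp (-Complex.I * t)) ^ p.2))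
      ((∑' n : ℕ, (a n : ℂ) * ((u : ℂ) * Complex.exp (Complex.I * t)) ^ n) *
      (∑' n : ℕ, (b n : ℂ) * ((v : ℂ) * Complex.exp (-Complex.I * t)) ^ n)) := by
    intro t
    have h1 : Summable fun n : ℕ => ‖(a n : ℂ) * ((u : ℂ) * Complex.exp (Complex.I * t)) ^ n‖ :=
      hA.congr fun n => (hAt t n).symm
    have h2 : Summable fun n : ℕ => ‖(b n : ℂ) * ((v : ℂ) * Complex.exp (-Complex.I * t)) ^ n‖ :=
      hB.congr fun n => (hBt t n).symm
    rw [tsum_mul_tsum_of_summable_norm h1 h2]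
    exact (summable_mul_of_summable_norm h1 h2).hasSum
  have hswap := intervalIntegral.hasSum_integral_of_dominated_convergence
    (μ := MeasureTheory.volume) (a := 0) (b := 2 * Real.pi)
    (F := fun (p : ℕ × ℕ) (t : ℝ) =>
      ((a p.1 : ℂ) * ((u : ℂ) * Complex.exp (Complex.I * t)) ^ p.1) *
      ((b p.2 : ℂ) * ((v : ℂ) * Complex.exp (-Complex.I * t)) ^ p.2))
    (f := fun t : ℝ =>
      (∑' n : ℕ, (a n : ℂ) * ((u : ℂ) * Complex.exp (Complex.I * t)) ^ n) *
      (∑' n : ℕ, (b n : ℂ) * ((v : ℂ) * Complex.exp (-Complex.I * t)) ^ n))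
    (fun p _ => ‖(a p.1 : ℂ) * (u : ℂ) ^ p.1‖ * ‖(b p.2 : ℂ) * (v : ℂ) ^ p.2‖)
    (fun p => (by fun_prop : Continuous _).aestronglyMeasurable)
    (fun p => Filter.Eventually.of_forall fun t _ => by rw [norm_mul, hAt, hBt])
    (Filter.Eventually.of_forall fun t _ => hAB)
    intervalIntegrable_const
    (Filter.Eventually.of_forall fun t _ => hprod t)
  have hint : ∀ p : ℕ × ℕ, (∫ t in (0:ℝ)..(2 * Real.pi),
      ((a p.1 : ℂ) * ((u : ℂ) * Complex.exp (Complex.I * t)) ^ p.1) *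
      ((b p.2 : ℂ) * ((v : ℂ) * Complex.exp (-Complex.I * t)) ^ p.2)) =
      ((a p.1 : ℂ) * (u : ℂ) ^ p.1 * ((b p.2 : ℂ) * (v : ℂ) ^ p.2)) *
        if p.1 = p.2 then 2 * (Real.pi : ℂ) else 0 := by
    intro p
    rw [← integral_character, ← intervalIntegral.integral_const_mul]
    congr 1
    funext t
    ring
  simp_rw [hint] at hswap
  -- Off-diagonal terms vanish, so the double sum reduces to the sum along `n ↦ (n, n)`.
  have hinj : Function.Injective fun n : ℕ => (n, n) := fun m n h => congrArg Prod.fst h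
  rw [← hinj.hasSum_iff (by
    rintro ⟨m, n⟩ hp
    have hmn : m ≠ n := fun h => hp ⟨m, by simp [h]⟩
    simp [hmn])] at hswap
  have hpi : (Real.pi : ℂ) ≠ 0 := Complex.ofReal_ne_zero.mpr Real.pi_ne_zero
  rw [← (hswap.mul_left (1 / (2 * (Real.pi : ℂ)))).tsum_eq, Complex.ofReal_tsum]
  refine tsum_congr fun n => ?_
  simp only [Function.comp_apply, if_true]
  push_cast
  field_simp
  ring
end

section
/- For every real number x, ∑_{n=0}^∞ x^n/(n!)^2 = (1/(2π)) ∫_0^{2π} e^{(x+1) cos t} cos((x-1) sin t) dt. -/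
/-!
On the unit circle the integrand is the real part of `exp (x e^{it}) * exp (e^{-it})`. Expanding both
exponentials gives the absolutely convergent double series
`∑ (xⁿ / n!) (1 / m!) e^{i(n-m)t}`, which may be integrated termwise over a full period. Only the
diagonal terms `n = m` survive, each contributing `2π xⁿ / (n!)²`.
-/

open Nat Real intervalIntegral

/-- Orthogonality of the characters `e^{int}` and `e^{imt}` on the circle. -/
lemma integral_exp_I_sub (n m : ℕ) :
    (∫ t in (0:ℝ)..(2 * Real.pi), Complex.exp (((n : ℂ) - m) * Complex.I * t)) =
      if n = m then ((2 * Real.pi : ℝ) : ℂ) else 0 := by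
  split_ifs with h
  · subst h
    simp
  · have h0 : ((n : ℂ) - m) * Complex.I ≠ 0 :=
      mul_ne_zero (sub_ne_zero.mpr (by exact_mod_cast h)) Complex.I_ne_zero
    rw [integral_exp_mul_complex h0]
    have h1 : Complex.exp (((n : ℂ) - m) * Complex.I * ((2 * Real.pi : ℝ) : ℂ)) = 1 := by
      rw [Complex.exp_eq_one_iff]
      exact ⟨(n : ℤ) - m, by push_cast; ring⟩
    rw [h1]
    simp

lemma hasSum_exp_complex (z : ℂ) : HasSum (fun n : ℕ => z ^ n / (n ! : ℂ)) (Complex.exp z) := by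
  rw [Complex.exp_eq_exp_ℂ]
  exact NormedSpace.expSeries_div_hasSum_exp z

lemma summable_norm_exp_complex (z : ℂ) : Summable (fun n : ℕ => ‖z ^ n / (n ! : ℂ)‖) :=
  NormedSpace.norm_expSeries_div_summable z

/-- The double exponential series of `exp (x e^{it}) * exp (e^{-it})`, with its terms collected into
characters. -/
lemma hasSum_double_exp (x t : ℝ) :
    HasSum (fun p : ℕ × ℕ => ((x : ℂ) ^ p.1 / (p.1 ! : ℂ) * (1 / (p.2 ! : ℂ))) *
        Complex.exp (((p.1 : ℂ) - p.2) * Complex.I * t))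
      (Complex.exp (x * Complex.exp (t * Complex.I)) *
        Complex.exp (Complex.exp (-(t * Complex.I)))) := by
  have hs := summable_mul_of_summable_norm
    (summable_norm_exp_complex (x * Complex.exp (t * Complex.I)))
    (summable_norm_exp_complex (Complex.exp (-(t * Complex.I))))
  have h := (hasSum_exp_complex (x * Complex.exp (t * Complex.I))).mul
    (hasSum_exp_complex (Complex.exp (-(t * Complex.I)))) hs
  have hterm : ∀ p : ℕ × ℕ, ((x : ℂ) ^ p.1 / (p.1 ! : ℂ) * (1 / (p.2 ! : ℂ))) *
        Complex.exp (((p.1 : ℂ) - p.2) * Complex.I * t) =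
      (x * Complex.exp (t * Complex.I)) ^ p.1 / (p.1 ! : ℂ) *
        (Complex.exp (-(t * Complex.I)) ^ p.2 / (p.2 ! : ℂ)) := by
    intro p
    generalize (p.1 ! : ℂ) = a
    generalize (p.2 ! : ℂ) = b
    rw [mul_pow, ← Complex.exp_nat_mul, ← Complex.exp_nat_mul,
      show ((p.1 : ℂ) - p.2) * Complex.I * t =
        (p.1 : ℂ) * (t * Complex.I) + (p.2 : ℂ) * (-(t * Complex.I)) by ring, Complex.exp_add]
    ring
  simpa only [hterm] using h

lemma re_double_exp (x t : ℝ) :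
    (Complex.exp (x * Complex.exp (t * Complex.I)) *
        Complex.exp (Complex.exp (-(t * Complex.I)))).re =
      Real.exp ((x + 1) * Real.cos t) * Real.cos ((x - 1) * Real.sin t) := by
  have h : -((t : ℂ) * Complex.I) = ((-t : ℝ) : ℂ) * Complex.I := by push_cast; ring
  rw [← Complex.exp_add, Complex.exp_re, h]
  congr 2
  · simp only [Complex.add_re, Complex.re_ofReal_mul, Complex.exp_ofReal_mul_I_re, Real.cos_neg]
    ring
  · simp only [Complex.add_im, Complex.im_ofReal_mul, Complex.exp_ofReal_mul_I_im, Real.sin_neg]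
    ring

/-- For every real `x`, `∑ xⁿ/(n!)² = (1/(2π)) ∫₀^{2π} e^{(x+1)cos t} cos((x-1) sin t) dt`. -/
theorem alpha_two_integral (x : ℝ) :
    (∑' n : ℕ, x ^ n / (n ! : ℝ) ^ 2) =
      (1 / (2 * Real.pi)) *
        ∫ t in (0:ℝ)..(2 * Real.pi),
          Real.exp ((x + 1) * Real.cos t) * Real.cos ((x - 1) * Real.sin t) := by
  have hb : Summable (fun p : ℕ × ℕ => ‖(x : ℂ) ^ p.1 / (p.1 ! : ℂ) * (1 / (p.2 ! : ℂ))‖) := by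
    simpa using (summable_norm_exp_complex x).mul_norm (summable_norm_exp_complex 1)
  have hsum := intervalIntegral.hasSum_integral_of_dominated_convergence
    (μ := MeasureTheory.volume) (a := 0) (b := 2 * Real.pi)
    (F := fun (p : ℕ × ℕ) (t : ℝ) => ((x : ℂ) ^ p.1 / (p.1 ! : ℂ) * (1 / (p.2 ! : ℂ))) *
        Complex.exp (((p.1 : ℂ) - p.2) * Complex.I * t))
    (fun p _ => ‖(x : ℂ) ^ p.1 / (p.1 ! : ℂ) * (1 / (p.2 ! : ℂ))‖)
    (fun p => (by fun_prop : Continuous _).aestronglyMeasurable)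
    (fun p => .of_forall fun t _ => by
      rw [norm_mul]
      have : ‖Complex.exp (((p.1 : ℂ) - p.2) * Complex.I * t)‖ = 1 := by
        rw [Complex.norm_exp]; simp
      rw [this, mul_one])
    (.of_forall fun t _ => hb)
    (by simp)
    (.of_forall fun t _ => hasSum_double_exp x t)
  simp only [intervalIntegral.integral_const_mul, integral_exp_I_sub] at hsum
  have hinj : Function.Injective (fun n : ℕ => (n, n)) := fun a b h => (Prod.mk.inj h).1
  rw [← hinj.hasSum_iff] at hsum
  swap
  · rintro ⟨a, b⟩ hab
    have : a ≠ b := fun h => hab ⟨a, by simp [h]⟩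
    simp [this]
  have hre := Complex.hasSum_re hsum
  have hint : (∫ t in (0:ℝ)..(2 * Real.pi), Complex.exp (x * Complex.exp (t * Complex.I)) *
      Complex.exp (Complex.exp (-(t * Complex.I)))).re =
      ∫ t in (0:ℝ)..(2 * Real.pi),
          Real.exp ((x + 1) * Real.cos t) * Real.cos ((x - 1) * Real.sin t) := by
    simp only [← re_double_exp]
    exact (Complex.reCLM.intervalIntegral_comp_comm
      ((by fun_prop : Continuous _).intervalIntegrable _ _)).symm
  rw [hint] at hre
  rw [← (hre.mul_left (1 / (2 * Real.pi))).tsum_eq]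
  refine tsum_congr fun n => ?_
  have hterm : ((x : ℂ) ^ n / (n ! : ℂ) * (1 / (n ! : ℂ))) * ((2 * Real.pi : ℝ) : ℂ) =
      ((x ^ n / (n ! : ℝ) * (1 / (n ! : ℝ)) * (2 * Real.pi) : ℝ) : ℂ) := by push_cast; ring
  simp only [Function.comp, if_true, hterm, Complex.ofReal_re]
  field_simp
end

section
/- For all real numbers a and b, (1/(2π)) ∫_{-π}^{π} e^{a cos x + b sin x} dx = ∑_{n=0}^∞ ((a^2 + b^2)/4)^n / (n!)^2; that is, the integral equals I_0(√(a^2+b^2)), where I_0 is the modified Bessel function of the first kind of order zero expressed by its power series I_0(z) = ∑_{n=0}^∞ (z^2/4)^n/(n!)^2. -/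
/-!
Writing `(a, b) = r (cos t, sin t)` turns the exponent into `r cos (x - t)`, and by `2π`-periodicity
the shift by `t` does not change the integral over a full period (`integral_rotate`).
Expanding `exp (r cos x)` as a power series and integrating termwise by dominated convergence
(`hasSum_moments`) leaves the moments of `cos` over a period: the odd ones vanish, and the even ones
are `2π (2n)! / (4ⁿ (n!)²)` by the reduction formula for `∫ cosⁿ`.
-/

open Nat Real intervalIntegral

lemma integral_cos_pow_period_succ (n : ℕ) :
    (∫ x in (-π)..π, cos x ^ (n + 2)) = (n + 1) / (n + 2) * ∫ x in (-π)..π, cos x ^ n := by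
  rw [integral_cos_pow]
  simp

lemma integral_cos_pow_period_odd (n : ℕ) : (∫ x in (-π)..π, cos x ^ (2 * n + 1)) = 0 := by
  induction n with
  | zero => simp
  | succ k ih =>
    rw [show 2 * (k + 1) + 1 = (2 * k + 1) + 2 by ring, integral_cos_pow_period_succ, ih, mul_zero]

lemma integral_cos_pow_period_even (n : ℕ) :
    (∫ x in (-π)..π, cos x ^ (2 * n)) = 2 * π * ((2 * n)! / (4 ^ n * (n ! : ℝ) ^ 2)) := by
  induction n with
  | zero => simp; ring
  | succ k ih =>
    rw [show 2 * (k + 1) = 2 * k + 2 by ring, integral_cos_pow_period_succ, ih,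
      Nat.factorial_succ (2 * k + 1), Nat.factorial_succ (2 * k), Nat.factorial_succ k]
    have h : (k ! : ℝ) ≠ 0 := by positivity
    push_cast
    field_simp
    ring

/-- Termwise integration of the exponential series of `exp (r cos x)`. -/
lemma hasSum_moments (r : ℝ) :
    HasSum (fun n : ℕ => ∫ x in (-π)..π, (r * cos x) ^ n / n !)
      (∫ x in (-π)..π, exp (r * cos x)) := by
  refine hasSum_integral_of_dominated_convergence (fun n _ => |r| ^ n / n !) ?_ ?_ ?_ ?_ ?_
  · intro n
    exact Continuous.aestronglyMeasurable (by fun_prop)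
  · intro n
    refine .of_forall fun x _ => ?_
    rw [norm_div, norm_pow, norm_mul, Real.norm_eq_abs, Real.norm_eq_abs, Real.norm_natCast]
    gcongr
    exact mul_le_of_le_one_right (abs_nonneg _) (abs_cos_le_one x)
  · exact .of_forall fun x _ => Real.summable_pow_div_factorial |r|
  · exact intervalIntegrable_const
  · refine .of_forall fun x _ => ?_
    rw [Real.exp_eq_exp_ℝ]
    exact NormedSpace.expSeries_div_hasSum_exp (r * cos x)

lemma integral_rotate (r t : ℝ) :
    (∫ x in (-π)..π, exp (r * cos (x - t))) = ∫ x in (-π)..π, exp (r * cos x) := by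
  have hper : Function.Periodic (fun x => exp (r * cos x)) (2 * π) := fun x => by simp
  rw [integral_comp_sub_right (fun x => exp (r * cos x))]
  have h := hper.intervalIntegral_add_eq (-π - t) (-π)
  rwa [show -π - t + 2 * π = π - t by ring, show -π + 2 * π = π by ring] at h

lemma hasSum_integral_exp_mul_cos (r : ℝ) :
    HasSum (fun n : ℕ => 2 * π * ((r ^ 2 / 4) ^ n / (n ! : ℝ) ^ 2))
      (∫ x in (-π)..π, exp (r * cos x)) := by
  have h := hasSum_moments r
  have hterm (n : ℕ) : (∫ x in (-π)..π, (r * cos x) ^ n / n !) =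
      r ^ n / n ! * ∫ x in (-π)..π, cos x ^ n := by
    rw [← integral_const_mul]
    congr 1
    ext x
    ring
  simp only [hterm] at h
  have hinj : Function.Injective (fun n : ℕ => 2 * n) := fun m n hmn => by
    dsimp only at hmn
    omega
  rw [← hinj.hasSum_iff] at h
  · convert h using 2 with n
    simp only [Function.comp_apply, integral_cos_pow_period_even]
    have h2 : ((2 * n)! : ℝ) ≠ 0 := by positivity
    rw [pow_mul, div_pow]
    field_simp
  · intro m hm
    obtain ⟨k, hk | hk⟩ := m.even_or_odd'
    · exact absurd ⟨k, hk.symm⟩ hm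
    · rw [hk, integral_cos_pow_period_odd, mul_zero]

/-- For all real `a, b`,
`(1/(2π)) ∫_{-π}^{π} e^{a cos x + b sin x} dx = ∑ ((a²+b²)/4)ⁿ/(n!)² = I₀(√(a²+b²))`. -/
theorem integral_exp_cos_sin_eq_besselI_zero (a b : ℝ) :
    (1 / (2 * Real.pi)) *
        (∫ x in (-Real.pi)..Real.pi, Real.exp (a * Real.cos x + b * Real.sin x)) =
      ∑' n : ℕ, ((a ^ 2 + b ^ 2) / 4) ^ n / (n ! : ℝ) ^ 2 := by
  obtain ⟨r, t, ha, hb⟩ : ∃ r t : ℝ, a = r * cos t ∧ b = r * sin t :=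
    ⟨‖(⟨a, b⟩ : ℂ)‖, Complex.arg ⟨a, b⟩, (Complex.norm_mul_cos_arg ⟨a, b⟩).symm,
      (Complex.norm_mul_sin_arg ⟨a, b⟩).symm⟩
  have hr : a ^ 2 + b ^ 2 = r ^ 2 := by
    rw [ha, hb]
    linear_combination r ^ 2 * sin_sq_add_cos_sq t
  have hexp (x : ℝ) : a * cos x + b * sin x = r * cos (x - t) := by
    rw [ha, hb, cos_sub]
    ring
  simp only [hexp]
  rw [integral_rotate, ← (hasSum_integral_exp_mul_cos r).tsum_eq, tsum_mul_left, hr]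
  field_simp
end

section
/- For every real number x, ∑_{n=0}^∞ x^n/(n!)^3 = (1/(4π^2)) ∫_0^{2π} ∫_0^{2π} e^{x e^{is}} · e^{(e^{-is}+1) cos t} · cos((e^{-is}-1) sin t) ds dt, where the integrand is complex-valued (with e^{is} = cos s + i sin s, and cos of a complex argument the complex cosine), and the double integral equals the real number on the left. -/
open Nat Real Complex intervalIntegral

/-!
With `z = e^{-is}`, Euler's formula for the cosine turns the integrand into
`½ e^{x e^{is}} (e^{z e^{it} + e^{-it}} + e^{z e^{-it} + e^{it}})`.
Both integrations then rest on one fact (`integral_exp_mul_tsum`): since the `n`-th Fourier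
coefficient of `e^{a e^{it}}` is `aⁿ/n!`, integrating `e^{a e^{it}} ∑ bₙ e^{-int}` over a period
gives `2π ∑ bₙ aⁿ/n!`. The inner integral contributes one such step, with
`bₙ = wⁿ/n!` and `w = e^{±it}`, and yields `2π ∑ xⁿ wⁿ/(n!)²`; the outer integral contributes the
third factorial. The frequency `c` below is `I` or `-I`, covering both orientations of the circle.
-/

/-- Termwise integration of a power series with absolutely summable coefficients along a curve `u`
in the unit circle, against a continuous weight `g`. -/
lemma hasSum_integral_mul_pow {g u : ℝ → ℂ} (hg : Continuous g) (hu : Continuous u)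
    (hu1 : ∀ t, ‖u t‖ = 1) {b : ℕ → ℂ} (hb : Summable fun n => ‖b n‖) :
    HasSum (fun n => b n * ∫ t in (0:ℝ)..(2 * Real.pi), g t * u t ^ n)
      (∫ t in (0:ℝ)..(2 * Real.pi), g t * ∑' n, b n * u t ^ n) := by
  have hs : ∀ t, Summable fun n => b n * u t ^ n := fun t => by
    apply Summable.of_norm
    simpa [hu1] using hb
  have key := intervalIntegral.hasSum_integral_of_dominated_convergence
    (μ := MeasureTheory.volume) (a := 0) (b := 2 * Real.pi)
    (F := fun n t => g t * (b n * u t ^ n)) (f := fun t => g t * ∑' n, b n * u t ^ n)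
    (fun n t => ‖g t‖ * ‖b n‖)
    (fun n => (by fun_prop : Continuous fun t => g t * (b n * u t ^ n)).aestronglyMeasurable)
    (fun n => .of_forall fun t _ => by simp [hu1])
    (.of_forall fun t _ => hb.mul_left _)
    (by
      simp_rw [tsum_mul_left]
      exact (by fun_prop : Continuous fun t => ‖g t‖ * ∑' n, ‖b n‖).intervalIntegrable _ _)
    (.of_forall fun t _ => (hs t).hasSum.mul_left _)
  simp_rw [mul_left_comm (g _) (b _), intervalIntegral.integral_const_mul] at key
  simpa only [mul_left_comm (g _) (b _)] using key

lemma norm_exp_mul_ofReal {c : ℂ} (hc : c = I ∨ c = -I) (t : ℝ) :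
    ‖Complex.exp (c * t)‖ = 1 := by
  rcases hc with rfl | rfl <;> simp [Complex.norm_exp]

lemma integral_exp_pow_mul_exp_neg_pow {c : ℂ} (hc : c = I ∨ c = -I) (m n : ℕ) :
    ∫ t in (0:ℝ)..(2 * Real.pi), Complex.exp (-c * t) ^ n * Complex.exp (c * t) ^ m =
      if m = n then 2 * (Real.pi : ℂ) else 0 := by
  have h : ∀ t : ℝ, Complex.exp (-c * t) ^ n * Complex.exp (c * t) ^ m =
      Complex.exp (((m : ℂ) - n) * c * t) := fun t => by
    rw [← Complex.exp_nat_mul, ← Complex.exp_nat_mul, ← Complex.exp_add]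
    congr 1
    ring
  simp_rw [h]
  split_ifs with hmn
  · simp [hmn]
  · have hc0 : c ≠ 0 := by rcases hc with rfl | rfl <;> simp
    have hd : (m : ℂ) - n ≠ 0 := sub_ne_zero.mpr (by exact_mod_cast hmn)
    rw [integral_exp_mul_complex (mul_ne_zero hd hc0)]
    have h1 : Complex.exp (((m : ℂ) - n) * c * ((2 * Real.pi : ℝ) : ℂ)) = 1 := by
      rw [Complex.exp_eq_one_iff]
      rcases hc with rfl | rfl
      · exact ⟨m - n, by push_cast; ring⟩
      · exact ⟨n - m, by push_cast; ring⟩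
    rw [h1]
    simp

lemma exp_mul_eq_tsum (a w : ℂ) :
    Complex.exp (a * w) = ∑' n : ℕ, a ^ n / (n ! : ℂ) * w ^ n := by
  rw [Complex.exp_eq_exp_ℂ, NormedSpace.exp_eq_tsum_div]
  refine tsum_congr fun n => ?_
  ring

lemma summable_norm_pow_div_factorial (a : ℂ) : Summable fun n : ℕ => ‖a ^ n / (n ! : ℂ)‖ := by
  simpa using Real.summable_pow_div_factorial ‖a‖

/-- The Fourier coefficients of `t ↦ e^{a e^{ct}}`. -/
lemma integral_exp_mul_exp_neg_pow {c : ℂ} (hc : c = I ∨ c = -I) (a : ℂ) (n : ℕ) :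
    ∫ t in (0:ℝ)..(2 * Real.pi),
      Complex.exp (a * Complex.exp (c * t)) * Complex.exp (-c * t) ^ n =
      2 * Real.pi * (a ^ n / (n ! : ℂ)) := by
  have h := hasSum_integral_mul_pow (g := fun t : ℝ => Complex.exp (-c * t) ^ n)
    (u := fun t : ℝ => Complex.exp (c * t)) (by fun_prop) (by fun_prop)
    (norm_exp_mul_ofReal hc) (summable_norm_pow_div_factorial a)
  simp_rw [← exp_mul_eq_tsum, integral_exp_pow_mul_exp_neg_pow hc] at h
  have h2 := hasSum_single (f := fun m : ℕ => a ^ m / (m ! : ℂ) *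
    (if m = n then 2 * (Real.pi : ℂ) else 0)) n (fun m hm => by simp [hm])
  have h3 := h.unique h2
  simp only [if_true] at h3
  rw [mul_comm (2 * (Real.pi : ℂ)), ← h3]
  congr 1 with t
  ring

lemma integral_exp_mul_tsum {c : ℂ} (hc : c = I ∨ c = -I) (a : ℂ) {b : ℕ → ℂ}
    (hb : Summable fun n => ‖b n‖) :
    ∫ t in (0:ℝ)..(2 * Real.pi),
      Complex.exp (a * Complex.exp (c * t)) * ∑' n, b n * Complex.exp (-c * t) ^ n =
      2 * Real.pi * ∑' n, b n * (a ^ n / (n ! : ℂ)) := by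
  have hc' : -c = I ∨ -c = -I := by
    rcases hc with rfl | rfl <;> simp
  have h := hasSum_integral_mul_pow (g := fun t : ℝ => Complex.exp (a * Complex.exp (c * t)))
    (u := fun t : ℝ => Complex.exp (-c * t)) (by fun_prop) (by fun_prop)
    (norm_exp_mul_ofReal hc') hb
  simp_rw [integral_exp_mul_exp_neg_pow hc] at h
  rw [← h.tsum_eq, ← tsum_mul_left]
  congr 1 with n
  ring

lemma inner_integral (x w : ℂ) :
    ∫ s in (0:ℝ)..(2 * Real.pi),
      Complex.exp (x * Complex.exp (I * s)) * Complex.exp (w * Complex.exp (-I * s)) =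
      2 * Real.pi * ∑' n : ℕ, x ^ n / (n ! : ℂ) ^ 2 * w ^ n := by
  simp_rw [exp_mul_eq_tsum w]
  rw [integral_exp_mul_tsum (.inl rfl) x (summable_norm_pow_div_factorial w)]
  congr 2 with n
  ring

lemma summable_norm_pow_div_factorial_sq (x : ℂ) :
    Summable fun n : ℕ => ‖x ^ n / (n ! : ℂ) ^ 2‖ := by
  refine (summable_norm_pow_div_factorial x).of_nonneg_of_le (fun n => norm_nonneg _) fun n => ?_
  have h1 : (1 : ℝ) ≤ (n ! : ℝ) := by exact_mod_cast n.factorial_pos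
  simp only [norm_div, norm_pow, Complex.norm_natCast]
  gcongr
  exact le_self_pow₀ h1 (by norm_num)

lemma outer_integral {c : ℂ} (hc : c = I ∨ c = -I) (x : ℂ) :
    ∫ t in (0:ℝ)..(2 * Real.pi), Complex.exp (Complex.exp (c * t)) *
      ∫ s in (0:ℝ)..(2 * Real.pi), Complex.exp (x * Complex.exp (I * s)) *
        Complex.exp (Complex.exp (-c * t) * Complex.exp (-I * s)) =
      4 * (Real.pi : ℂ) ^ 2 * ∑' n : ℕ, x ^ n / (n ! : ℂ) ^ 3 := by
  simp_rw [inner_integral]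
  have h := integral_exp_mul_tsum hc 1 (summable_norm_pow_div_factorial_sq x)
  have h3 : ∀ n : ℕ, x ^ n / (n ! : ℂ) ^ 2 * (1 ^ n / (n ! : ℂ)) = x ^ n / (n ! : ℂ) ^ 3 :=
    fun n => by rw [one_pow, _root_.div_mul_div_comm, mul_one, ← pow_succ]
  simp_rw [h3, one_mul] at h
  simp_rw [mul_left_comm _ (2 * (Real.pi : ℂ))]
  rw [intervalIntegral.integral_const_mul, h]
  ring

lemma integrand_eq (z : ℂ) (t : ℝ) :
    Complex.exp ((z + 1) * (Real.cos t : ℂ)) * Complex.cos ((z - 1) * (Real.sin t : ℂ)) =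
      (Complex.exp (Complex.exp (-I * t)) * Complex.exp (Complex.exp (I * t) * z) +
        Complex.exp (Complex.exp (I * t)) * Complex.exp (Complex.exp (-I * t) * z)) / 2 := by
  have e1 : Complex.exp (I * t) = Complex.cos t + Complex.sin t * I := by
    rw [mul_comm, Complex.exp_mul_I]
  have e2 : Complex.exp (-I * t) = Complex.cos t - Complex.sin t * I := by
    rw [neg_mul, mul_comm, ← neg_mul, Complex.exp_mul_I, Complex.cos_neg, Complex.sin_neg]
    ring
  rw [e1, e2, Complex.cos, mul_div_assoc', mul_add]
  simp_rw [← Complex.exp_add]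
  push_cast
  congr 3 <;> ring

/-- For every real `x`,
`∑ xⁿ/(n!)³ = (1/(4π²)) ∫₀^{2π} ∫₀^{2π} e^{x e^{is}} e^{(e^{-is}+1) cos t} cos((e^{-is}-1) sin t) ds dt`,
a complex double integral whose value is the real number on the left. -/
theorem alpha_three_complex_double_integral (x : ℝ) :
    ((∑' n : ℕ, x ^ n / (n ! : ℝ) ^ 3 : ℝ) : ℂ) =
      (1 / (4 * (Real.pi : ℂ) ^ 2)) *
        ∫ t in (0:ℝ)..(2 * Real.pi), ∫ s in (0:ℝ)..(2 * Real.pi),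
          Complex.exp ((x : ℂ) * Complex.exp (Complex.I * s)) *
          Complex.exp ((Complex.exp (-Complex.I * s) + 1) * (Real.cos t : ℂ)) *
          Complex.cos ((Complex.exp (-Complex.I * s) - 1) * (Real.sin t : ℂ)) := by
  have hsplit : ∀ t : ℝ, (∫ s in (0:ℝ)..(2 * Real.pi),
      Complex.exp ((x : ℂ) * Complex.exp (I * s)) *
      Complex.exp ((Complex.exp (-I * s) + 1) * (Real.cos t : ℂ)) *
      Complex.cos ((Complex.exp (-I * s) - 1) * (Real.sin t : ℂ))) =
      (Complex.exp (Complex.exp (-I * t)) *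
        (∫ s in (0:ℝ)..(2 * Real.pi), Complex.exp (x * Complex.exp (I * s)) *
          Complex.exp (Complex.exp (I * t) * Complex.exp (-I * s))) +
      Complex.exp (Complex.exp (I * t)) *
        (∫ s in (0:ℝ)..(2 * Real.pi), Complex.exp (x * Complex.exp (I * s)) *
          Complex.exp (Complex.exp (-I * t) * Complex.exp (-I * s)))) / 2 := fun t => by
    rw [← intervalIntegral.integral_const_mul, ← intervalIntegral.integral_const_mul,
      ← intervalIntegral.integral_add
        (Continuous.intervalIntegrable (by fun_prop) _ _)
        (Continuous.intervalIntegrable (by fun_prop) _ _),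
      ← intervalIntegral.integral_div]
    congr 1 with s
    rw [mul_assoc, integrand_eq]
    ring
  have hint : ∀ c : ℂ, IntervalIntegrable (fun t : ℝ => Complex.exp (Complex.exp (c * t)) *
      ∫ s in (0:ℝ)..(2 * Real.pi), Complex.exp ((x : ℂ) * Complex.exp (I * s)) *
        Complex.exp (Complex.exp (-c * t) * Complex.exp (-I * s)))
      MeasureTheory.volume 0 (2 * Real.pi) := fun c => by
    apply Continuous.intervalIntegrable
    apply Continuous.mul (by fun_prop)
    apply intervalIntegral.continuous_parametric_intervalIntegral_of_continuous'
    fun_prop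
  have h1 := hint (-I)
  have o1 := outer_integral (c := -I) (.inr rfl) x
  rw [neg_neg] at h1 o1
  simp_rw [hsplit]
  rw [intervalIntegral.integral_div, intervalIntegral.integral_add h1 (hint I), o1,
    outer_integral (.inl rfl) x]
  have hpi : (Real.pi : ℂ) ≠ 0 := by exact_mod_cast Real.pi_ne_zero
  push_cast
  field_simp
  ring
end

section
/- ∑_{n=0}^∞ 1/(n!)^3 = (1/(4π^2)) ∫_0^{2π} ∫_0^{2π} e^{cos s + cos s cos t + cos t} cos(sin s − sin s cos t) cos(cos s sin t − sin t) cosh(sin s sin t) ds dt − (1/(4π^2)) ∫_0^{2π} ∫_0^{2π} e^{cos s + cos s cos t + cos t} sin(sin s − sin s cos t) sin(cos s sin t − sin t) sinh(sin s sin t) ds dt. -/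
/-!
Put `P s t = exp (x + y + 1 / (x y))` with `x = e^{is}`, `y = e^{it}`. Sum and difference formulas
show that the difference of the two real integrands is the average of `Re (P s t)` and
`Re (P s (-t))` (lemma `integrand_eq`), and by periodicity both have the same double integral.

The double integral of `P` extracts the constant term of `exp x · exp y · exp (1 / (x y))`, which is
`∑ 1 / (n!)³`, up to the factor `(2π)²`. This is carried out one variable at a time by
`integral_exp_mul_tsum`: integrating `exp (e^{is}) ∑ aₙ e^{-ins}` over a period gives
`2π ∑ aₙ / n!` for absolutely summable `a`. It is applied to `aₙ = e^{-int} / n!` in the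
variable `s`, and then to `aₙ = 1 / (n!)²` in the variable `t`.
-/

open Nat Real intervalIntegral

/-- Termwise integration over a period of an absolutely convergent power series in a function `u`
with values in the unit disc, against a bounded continuous weight `g`. -/
lemma integral_mul_tsum_pow {b : ℕ → ℂ} (hb : Summable fun n => ‖b n‖) {g u : ℝ → ℂ}
    (hg : Continuous g) (hu : Continuous u) {M : ℝ} (hgM : ∀ s, ‖g s‖ ≤ M)
    (hu1 : ∀ s, ‖u s‖ ≤ 1) :
    ∫ s in (0:ℝ)..(2 * π), g s * ∑' n, b n * u s ^ n
      = ∑' n, b n * ∫ s in (0:ℝ)..(2 * π), g s * u s ^ n := by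
  have hle : ∀ n s, ‖b n * u s ^ n‖ ≤ ‖b n‖ := fun n s => by
    rw [norm_mul, norm_pow]
    exact mul_le_of_le_one_right (norm_nonneg _) (pow_le_one₀ (norm_nonneg _) (hu1 s))
  have hM : 0 ≤ M := (norm_nonneg _).trans (hgM 0)
  have h := intervalIntegral.hasSum_integral_of_dominated_convergence
    (μ := MeasureTheory.volume) (a := (0:ℝ)) (b := 2 * π)
    (F := fun n s => g s * (b n * u s ^ n)) (f := fun s => g s * ∑' n, b n * u s ^ n)
    (fun n _ => M * ‖b n‖)
    (fun n => (by fun_prop : Continuous fun s => g s * (b n * u s ^ n)).aestronglyMeasurable)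
    (fun n => Filter.Eventually.of_forall fun s _ => by
      rw [norm_mul]
      exact mul_le_mul (hgM s) (hle n s) (norm_nonneg _) hM)
    (Filter.Eventually.of_forall fun s _ => hb.mul_left M)
    (by simp)
    (Filter.Eventually.of_forall fun s _ =>
      ((Summable.of_norm_bounded hb (fun n => hle n s)).hasSum).mul_left (g s))
  rw [← h.tsum_eq]
  refine tsum_congr fun n => ?_
  rw [← intervalIntegral.integral_const_mul]
  congr 1
  ext s
  ring

lemma summable_norm_inv_factorial : Summable fun n : ℕ => ‖((n ! : ℂ))⁻¹‖ := by
  simpa using Real.summable_pow_div_factorial 1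

lemma exp_eq_tsum (z : ℂ) : Complex.exp z = ∑' n : ℕ, ((n ! : ℂ))⁻¹ * z ^ n := by
  rw [Complex.exp_eq_exp_ℂ, NormedSpace.exp_eq_tsum (𝕂 := ℂ)]
  simp

lemma norm_exp_neg_mul_I (s : ℝ) : ‖Complex.exp (-(s * Complex.I))‖ = 1 := by
  rw [← neg_mul, ← Complex.ofReal_neg, Complex.norm_exp_ofReal_mul_I]

lemma integral_exp_int (m n : ℕ) :
    ∫ s in (0:ℝ)..(2 * π), Complex.exp (-(s * Complex.I)) ^ n * Complex.exp (s * Complex.I) ^ m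
      = if m = n then 2 * (π : ℂ) else 0 := by
  have h : ∀ s : ℝ, Complex.exp (-(s * Complex.I)) ^ n * Complex.exp (s * Complex.I) ^ m
      = Complex.exp ((((m : ℂ) - n) * Complex.I) * s) := fun s => by
    rw [← Complex.exp_nat_mul, ← Complex.exp_nat_mul, ← Complex.exp_add]
    congr 1
    ring
  simp_rw [h]
  split_ifs with hmn
  · simp [hmn]
  · have hc : ((m : ℂ) - n) * Complex.I ≠ 0 :=
      mul_ne_zero (sub_ne_zero.2 (by exact_mod_cast hmn)) Complex.I_ne_zero
    rw [integral_exp_mul_complex hc]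
    have : Complex.exp (((m : ℂ) - n) * Complex.I * ((2 * π : ℝ) : ℂ)) = 1 := by
      rw [Complex.exp_eq_one_iff]
      exact ⟨(m : ℤ) - n, by push_cast; ring⟩
    rw [this]
    simp

/-- The `n`-th Taylor coefficient of `exp`, as a Fourier coefficient on the unit circle. -/
lemma integral_exp_mul_pow (n : ℕ) :
    ∫ s in (0:ℝ)..(2 * π),
        Complex.exp (Complex.exp (s * Complex.I)) * Complex.exp (-(s * Complex.I)) ^ n
      = 2 * π * ((n ! : ℂ))⁻¹ := by
  have h := integral_mul_tsum_pow summable_norm_inv_factorial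
    (g := fun s => Complex.exp (-(s * Complex.I)) ^ n) (u := fun s => Complex.exp (s * Complex.I))
    (by fun_prop) (by fun_prop) (M := 1)
    (fun s => by rw [norm_pow, norm_exp_neg_mul_I, one_pow])
    (fun s => (Complex.norm_exp_ofReal_mul_I s).le)
  simp_rw [← exp_eq_tsum, integral_exp_int] at h
  simp_rw [mul_comm (Complex.exp (Complex.exp _))]
  rw [h, tsum_eq_single n (fun m hm => by simp [hm])]
  simp [mul_comm]

/-- Integrating against `exp (e^{is})` divides the `n`-th coefficient of a series in `e^{-is}`
by `n!`. -/
lemma integral_exp_mul_tsum_s6 {a : ℕ → ℂ} (ha : Summable fun n => ‖a n‖) :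
    ∫ s in (0:ℝ)..(2 * π), Complex.exp (Complex.exp (s * Complex.I)) *
        ∑' n, a n * Complex.exp (-(s * Complex.I)) ^ n
      = 2 * π * ∑' n, a n * ((n ! : ℂ))⁻¹ := by
  rw [integral_mul_tsum_pow ha (by fun_prop) (by fun_prop) (M := Real.exp 1)
    (fun s => ?_) (fun s => (norm_exp_neg_mul_I s).le)]
  · simp_rw [integral_exp_mul_pow]
    rw [← tsum_mul_left]
    exact tsum_congr fun n => by ring
  · rw [Complex.norm_exp]
    exact Real.exp_le_exp.2 ((Complex.re_le_norm _).trans (Complex.norm_exp_ofReal_mul_I s).le)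

/-- The function `exp (x + y + 1 / (x y))` on the torus `x = e^{is}`, `y = e^{it}`. -/
noncomputable def torusExp (s t : ℝ) : ℂ :=
  Complex.exp (Complex.exp (s * Complex.I) + Complex.exp (t * Complex.I) +
    Complex.exp (-(t * Complex.I)) * Complex.exp (-(s * Complex.I)))

lemma continuous_torusExp : Continuous fun p : ℝ × ℝ => torusExp p.2 p.1 := by
  unfold torusExp
  fun_prop

lemma integral_torusExp_inner (t : ℝ) :
    ∫ s in (0:ℝ)..(2 * π), torusExp s t =
      2 * π * (Complex.exp (Complex.exp (t * Complex.I)) *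
        ∑' n : ℕ, (((n ! : ℂ))⁻¹ * ((n ! : ℂ))⁻¹) * Complex.exp (-(t * Complex.I)) ^ n) := by
  have h := integral_exp_mul_tsum_s6
    (a := fun n => ((n ! : ℂ))⁻¹ * Complex.exp (-(t * Complex.I)) ^ n)
    (by simpa [norm_mul, norm_pow, norm_exp_neg_mul_I] using summable_norm_inv_factorial)
  simp_rw [mul_assoc _ (Complex.exp _ ^ _) (Complex.exp _ ^ _), ← mul_pow, ← exp_eq_tsum] at h
  have h2 : ∀ s, torusExp s t = Complex.exp (Complex.exp (t * Complex.I)) *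
      (Complex.exp (Complex.exp (s * Complex.I)) *
        Complex.exp (Complex.exp (-(t * Complex.I)) * Complex.exp (-(s * Complex.I)))) := fun s => by
    rw [torusExp, Complex.exp_add, Complex.exp_add]
    ring
  simp_rw [h2]
  rw [intervalIntegral.integral_const_mul, h, mul_left_comm]
  congr 3
  ext n
  ring

lemma integral_torusExp :
    ∫ t in (0:ℝ)..(2 * π), ∫ s in (0:ℝ)..(2 * π), torusExp s t =
      ((4 * π ^ 2 * ∑' n : ℕ, 1 / (n ! : ℝ) ^ 3 : ℝ) : ℂ) := by
  simp_rw [integral_torusExp_inner]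
  have hs : Summable fun n : ℕ => ‖((n ! : ℂ))⁻¹ * ((n ! : ℂ))⁻¹‖ := by
    refine Summable.of_nonneg_of_le (fun _ => norm_nonneg _) (fun n => ?_)
      summable_norm_inv_factorial
    rw [norm_mul]
    refine mul_le_of_le_one_left (norm_nonneg _) ?_
    rw [norm_inv, Complex.norm_natCast]
    exact inv_le_one_of_one_le₀ (by exact_mod_cast Nat.factorial_pos n)
  rw [intervalIntegral.integral_const_mul, integral_exp_mul_tsum_s6 hs]
  push_cast
  have : ∀ n : ℕ, ((n ! : ℂ))⁻¹ * ((n ! : ℂ))⁻¹ * ((n ! : ℂ))⁻¹ = 1 / (n ! : ℂ) ^ 3 := fun n => by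
    rw [one_div, ← inv_pow]
    ring
  simp_rw [this]
  ring

lemma integral_re_torusExp :
    ∫ t in (0:ℝ)..(2 * π), ∫ s in (0:ℝ)..(2 * π), (torusExp s t).re =
      4 * π ^ 2 * ∑' n : ℕ, 1 / (n ! : ℝ) ^ 3 := by
  have h := congrArg Complex.re integral_torusExp
  rw [Complex.ofReal_re] at h
  rw [← h]
  have hc := continuous_torusExp
  have h1 : ∀ t, ∫ s in (0:ℝ)..(2 * π), (torusExp s t).re
      = (∫ s in (0:ℝ)..(2 * π), torusExp s t).re := fun t =>
    Complex.reCLM.intervalIntegral_comp_comm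
      ((hc.comp (by fun_prop : Continuous fun s : ℝ => (t, s))).intervalIntegrable _ _)
  simp_rw [h1]
  exact Complex.reCLM.intervalIntegral_comp_comm
    ((intervalIntegral.continuous_parametric_intervalIntegral_of_continuous'
      (f := fun t s => torusExp s t) hc 0 (2 * π)).intervalIntegrable _ _)

lemma re_torusExp (s t : ℝ) : (torusExp s t).re =
    Real.exp (cos s + cos t + (cos s * cos t - sin s * sin t)) *
      cos (sin s + sin t - (sin s * cos t + cos s * sin t)) := by
  have e : Complex.exp (-(t * Complex.I)) * Complex.exp (-(s * Complex.I))
      = Complex.exp ((-(s + t) : ℝ) * Complex.I) := by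
    rw [← Complex.exp_add]
    congr 1
    push_cast
    ring
  rw [torusExp, e, Complex.exp_re]
  simp only [Complex.add_re, Complex.add_im, Complex.exp_ofReal_mul_I_re,
    Complex.exp_ofReal_mul_I_im, Real.cos_neg, Real.sin_neg, Real.cos_add s t, Real.sin_add s t]
  rfl

lemma integrand_eq_s6 (s t : ℝ) :
    Real.exp (cos s + cos s * cos t + cos t) * cos (sin s - sin s * cos t) *
        cos (cos s * sin t - sin t) * Real.cosh (sin s * sin t) -
      Real.exp (cos s + cos s * cos t + cos t) * sin (sin s - sin s * cos t) *
        sin (cos s * sin t - sin t) * Real.sinh (sin s * sin t) =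
    1 / 2 * (torusExp s t).re + 1 / 2 * (torusExp s (2 * π - t)).re := by
  rw [re_torusExp, re_torusExp, Real.cos_two_pi_sub, Real.sin_two_pi_sub]
  set A := sin s - sin s * cos t with hA
  set B := cos s * sin t - sin t with hB
  set C := sin s * sin t with hC
  set E := cos s + cos s * cos t + cos t with hE
  have h1 : cos s + cos t + (cos s * cos t - C) = E + -C := by rw [hE]; ring
  have h2 : cos s + cos t + (cos s * cos t - sin s * -sin t) = E + C := by rw [hE, hC]; ring
  have h3 : sin s + sin t - (sin s * cos t + cos s * sin t) = A - B := by rw [hA, hB]; ring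
  have h4 : sin s + -sin t - (sin s * cos t + cos s * -sin t) = A + B := by rw [hA, hB]; ring
  rw [h1, h2, h3, h4, Real.exp_add E (-C), Real.exp_add E C, Real.cos_sub A B,
    Real.cos_add A B, Real.cosh_eq, Real.sinh_eq]
  ring

/-- Real double-integral identity for `∑ 1/(n!)³`. -/
theorem sum_inv_factorial_cube_double_integral :
    (∑' n : ℕ, 1 / (n ! : ℝ) ^ 3) =
      (1 / (4 * Real.pi ^ 2)) *
        (∫ t in (0:ℝ)..(2 * Real.pi), ∫ s in (0:ℝ)..(2 * Real.pi),
          Real.exp (Real.cos s + Real.cos s * Real.cos t + Real.cos t) *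
            Real.cos (Real.sin s - Real.sin s * Real.cos t) *
            Real.cos (Real.cos s * Real.sin t - Real.sin t) *
            Real.cosh (Real.sin s * Real.sin t)) -
      (1 / (4 * Real.pi ^ 2)) *
        (∫ t in (0:ℝ)..(2 * Real.pi), ∫ s in (0:ℝ)..(2 * Real.pi),
          Real.exp (Real.cos s + Real.cos s * Real.cos t + Real.cos t) *
            Real.sin (Real.sin s - Real.sin s * Real.cos t) *
            Real.sin (Real.cos s * Real.sin t - Real.sin t) *
            Real.sinh (Real.sin s * Real.sin t)) := by
  have hin : ∀ f : ℝ → ℝ → ℝ, (Continuous fun p : ℝ × ℝ => f p.1 p.2) → ∀ t,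
      IntervalIntegrable (f t) MeasureTheory.volume 0 (2 * π) := fun f hf t =>
    (by fun_prop : Continuous fun s => f t s).intervalIntegrable _ _
  have hout : ∀ f : ℝ → ℝ → ℝ, (Continuous fun p : ℝ × ℝ => f p.1 p.2) →
      IntervalIntegrable (fun t => ∫ s in (0:ℝ)..(2 * π), f t s)
        MeasureTheory.volume 0 (2 * π) := fun f hf =>
    (intervalIntegral.continuous_parametric_intervalIntegral_of_continuous'
      hf 0 (2 * π)).intervalIntegrable _ _
  have hsub : ∀ f g : ℝ → ℝ → ℝ, (Continuous fun p : ℝ × ℝ => f p.1 p.2) →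
      (Continuous fun p : ℝ × ℝ => g p.1 p.2) →
      (∫ t in (0:ℝ)..(2 * π), ∫ s in (0:ℝ)..(2 * π), f t s) -
        (∫ t in (0:ℝ)..(2 * π), ∫ s in (0:ℝ)..(2 * π), g t s) =
      ∫ t in (0:ℝ)..(2 * π), ∫ s in (0:ℝ)..(2 * π), (f t s - g t s) := fun f g hf hg => by
    rw [← intervalIntegral.integral_sub (hout f hf) (hout g hg)]
    congr 1
    ext t
    rw [← intervalIntegral.integral_sub (hin f hf t) (hin g hg t)]
  have hc := continuous_torusExp
  have hP : Continuous fun p : ℝ × ℝ => (torusExp p.2 p.1).re := Complex.continuous_re.comp hc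
  have hQ : Continuous fun p : ℝ × ℝ => (torusExp p.2 (2 * π - p.1)).re :=
    hP.comp (by fun_prop : Continuous fun p : ℝ × ℝ => (2 * π - p.1, p.2))
  rw [← mul_sub, hsub _ _ (by fun_prop) (by fun_prop)]
  simp_rw [integrand_eq_s6]
  have hsplit : ∀ t, ∫ s in (0:ℝ)..(2 * π),
      (1 / 2 * (torusExp s t).re + 1 / 2 * (torusExp s (2 * π - t)).re) =
      1 / 2 * (∫ s in (0:ℝ)..(2 * π), (torusExp s t).re) +
        1 / 2 * ∫ s in (0:ℝ)..(2 * π), (torusExp s (2 * π - t)).re := fun t => by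
    rw [intervalIntegral.integral_add ((hin (fun t s => (torusExp s t).re) hP t).const_mul _)
      ((hin (fun t s => (torusExp s (2 * π - t)).re) hQ t).const_mul _),
      intervalIntegral.integral_const_mul, intervalIntegral.integral_const_mul]
  simp_rw [hsplit]
  rw [intervalIntegral.integral_add ((hout (fun t s => (torusExp s t).re) hP).const_mul _)
      ((hout (fun t s => (torusExp s (2 * π - t)).re) hQ).const_mul _),
    intervalIntegral.integral_const_mul, intervalIntegral.integral_const_mul,
    intervalIntegral.integral_comp_sub_left
      (fun t => ∫ s in (0:ℝ)..(2 * π), (torusExp s t).re) (2 * π),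
    sub_self, sub_zero, integral_re_torusExp]
  field_simp
  ring
end

section
/- The function y(x) = ∑_{n=0}^∞ x^n/(n!)^2 satisfies the second-order linear differential equation x·y''(x) + y'(x) − y(x) = 0 for all real x. -/
open Nat Real

/-!
The series may be differentiated term by term: if `|c n| ≤ 1 / n!`, then `∑ c n xⁿ` has derivative
`∑ (n + 1) c (n + 1) xⁿ` (`hasDerivAt_tsum_coeff`), and the new coefficients obey the same bound
(`shifted_coeff_bound`), so this applies twice. For `a n = 1 / (n!)²` and `b n = (n + 1) a (n + 1)`
the coefficient of `xⁿ` in `x y'' + y'` is `n b n + b n = (n + 1)² a (n + 1) = a n`, that of `y`.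
-/

lemma summable_coeff {c : ℕ → ℝ} (hc : ∀ n, |c n| ≤ 1 / (n ! : ℝ)) (x : ℝ) :
    Summable fun n => c n * x ^ n := by
  refine Summable.of_norm_bounded (Real.summable_pow_div_factorial |x|) fun n => ?_
  rw [norm_mul, norm_pow, Real.norm_eq_abs, Real.norm_eq_abs, div_eq_mul_one_div, mul_comm]
  exact mul_le_mul_of_nonneg_left (hc n) (by positivity)

/-- The bound `1 / n!` on the coefficients is preserved by formal differentiation. -/
lemma shifted_coeff_bound {c : ℕ → ℝ} (hc : ∀ n, |c n| ≤ 1 / (n ! : ℝ)) (n : ℕ) :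
    |((n : ℝ) + 1) * c (n + 1)| ≤ 1 / (n ! : ℝ) := by
  have hn : (0 : ℝ) < (n : ℝ) + 1 := by positivity
  rw [abs_mul, abs_of_pos hn]
  refine (mul_le_mul_of_nonneg_left (hc (n + 1)) hn.le).trans_eq ?_
  rw [Nat.factorial_succ]
  push_cast
  field_simp

lemma hasDerivAt_tsum_coeff {c : ℕ → ℝ} (hc : ∀ n, |c n| ≤ 1 / (n ! : ℝ)) (x : ℝ) :
    HasDerivAt (fun z => ∑' n, c n * z ^ n) (∑' n : ℕ, (((n : ℝ) + 1) * c (n + 1)) * x ^ n) x := by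
  set R : ℝ := |x| + 1 with hR
  have hR0 : 0 < R := by positivity
  have hxR : x ∈ Metric.ball (0 : ℝ) R := by simp [hR]
  -- On the ball of radius `R`, the `n`-th differentiated term is bounded by `n Rⁿ⁻¹ / n!`.
  have hu : Summable fun n : ℕ => 1 / (n ! : ℝ) * (n * R ^ (n - 1)) := by
    rw [← summable_nat_add_iff 1]
    refine (Real.summable_pow_div_factorial R).congr fun n => ?_
    rw [Nat.factorial_succ, Nat.add_sub_cancel]
    push_cast
    field_simp
  have hbound : ∀ (n : ℕ) (y : ℝ), y ∈ Metric.ball (0 : ℝ) R →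
      ‖c n * (n * y ^ (n - 1))‖ ≤ 1 / (n ! : ℝ) * (n * R ^ (n - 1)) := by
    intro n y hy
    have hy' : |y| ≤ R := by simpa using (mem_ball_zero_iff.1 hy).le
    rw [norm_mul, norm_mul, norm_pow, Real.norm_natCast, Real.norm_eq_abs, Real.norm_eq_abs]
    gcongr
    exact hc n
  have key := hasDerivAt_tsum_of_isPreconnected (g := fun n z => c n * z ^ n) hu
    Metric.isOpen_ball (convex_ball (0 : ℝ) R).isPreconnected
    (fun n y _ => (hasDerivAt_pow n y).const_mul (c n)) hbound hxR (summable_coeff hc x) hxR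
  refine key.congr_deriv ?_
  rw [(Summable.of_norm_bounded hu fun n => hbound n x hxR).tsum_eq_zero_add]
  simp only [Nat.cast_zero, zero_mul, mul_zero, zero_add, Nat.add_sub_cancel]
  refine tsum_congr fun n => ?_
  push_cast
  ring

/-- `y(x) = ∑ xⁿ/(n!)²` satisfies `x y'' + y' - y = 0`. -/
theorem alpha_two_ode (x : ℝ) :
    x * deriv (deriv (fun x : ℝ => ∑' n : ℕ, x ^ n / (n ! : ℝ) ^ 2)) x +
        deriv (fun x : ℝ => ∑' n : ℕ, x ^ n / (n ! : ℝ) ^ 2) x -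
        (∑' n : ℕ, x ^ n / (n ! : ℝ) ^ 2) = 0 := by
  have ha : ∀ n : ℕ, |1 / (n ! : ℝ) ^ 2| ≤ 1 / (n ! : ℝ) := by
    intro n
    have h1 : (1 : ℝ) ≤ n ! := by exact_mod_cast n.factorial_pos
    rw [abs_of_pos (by positivity)]
    exact one_div_le_one_div_of_le (by positivity) (le_self_pow₀ h1 two_ne_zero)
  have hb := shifted_coeff_bound ha
  have hcoeff : ∀ z : ℝ, (∑' n : ℕ, z ^ n / (n ! : ℝ) ^ 2) = ∑' n : ℕ, 1 / (n ! : ℝ) ^ 2 * z ^ n :=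
    fun z => tsum_congr fun n => by ring
  simp only [hcoeff]
  rw [funext fun z => (hasDerivAt_tsum_coeff ha z).deriv, (hasDerivAt_tsum_coeff hb x).deriv]
  beta_reduce
  have hs2 := (summable_coeff (shifted_coeff_bound hb) x).mul_left x
  have hs1 := summable_coeff hb x
  -- Splitting off the constant terms of `y'` and `y` aligns them with the shifted series `x y''`.
  rw [← tsum_mul_left, hs1.tsum_eq_zero_add, (summable_coeff ha x).tsum_eq_zero_add, sub_eq_zero,
    add_left_comm, ← hs2.tsum_add ((summable_nat_add_iff 1).2 hs1)]
  congr 1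
  · simp
  · refine tsum_congr fun n => ?_
    simp only [Nat.factorial_succ]
    push_cast
    field_simp
    ring
end

section
/- The function y(x) = ∑_{n=0}^∞ x^n/(n!)^3 satisfies the third-order linear differential equation x^2·y'''(x) + 3x·y''(x) + y'(x) − y(x) = 0 for all real x. -/
open Nat Real

/-!
Put `D k x = ∑ xⁿ / (n! ((n+k)!)²)`, so that `y = D 0`. Termwise differentiation, justified by
domination by the exponential series on bounded intervals, gives `(D k)' = D (k+1)`; hence the
derivatives of `y` are `D 1`, `D 2`, `D 3`. Rewriting `x D 2` and `x² D 3` as series in `xⁿ` with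
denominators `n! ((n+1)!)²`, their coefficients acquire the factors `n` and `n(n-1)`, and the
equation reduces to `n(n-1) + 3n + 1 = (n+1)²`.
-/

/-- The series `∑ xⁿ / (n! ((n+k)!)²)`, which is the `k`-th derivative of `∑ xⁿ/(n!)³`. -/
noncomputable def alphaD (k : ℕ) (x : ℝ) : ℝ :=
  ∑' n : ℕ, x ^ n / ((n ! : ℝ) * ((n + k)! : ℝ) ^ 2)

lemma abs_alphaD_term_le (k n : ℕ) (x : ℝ) :
    ‖x ^ n / ((n ! : ℝ) * ((n + k)! : ℝ) ^ 2)‖ ≤ |x| ^ n / (n ! : ℝ) := by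
  have h1 : (0 : ℝ) < n ! := by exact_mod_cast n.factorial_pos
  have h2 : (1 : ℝ) ≤ ((n + k)! : ℝ) ^ 2 :=
    one_le_pow₀ (by exact_mod_cast (n + k).factorial_pos)
  rw [Real.norm_eq_abs, abs_div, abs_pow, abs_of_pos (by positivity : 0 < (n ! : ℝ) * _)]
  exact div_le_div_of_nonneg_left (by positivity) h1 (le_mul_of_one_le_right h1.le h2)

lemma summable_alphaD_term (k : ℕ) (x : ℝ) :
    Summable fun n : ℕ => x ^ n / ((n ! : ℝ) * ((n + k)! : ℝ) ^ 2) :=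
  Summable.of_norm_bounded (Real.summable_pow_div_factorial |x|)
    fun n => abs_alphaD_term_le k n x

lemma hasSum_alphaD (k : ℕ) (x : ℝ) :
    HasSum (fun n : ℕ => x ^ n / ((n ! : ℝ) * ((n + k)! : ℝ) ^ 2)) (alphaD k x) :=
  (summable_alphaD_term k x).hasSum

lemma alphaD_deriv_term_succ (k n : ℕ) (y : ℝ) :
    ((n + 1 : ℕ) : ℝ) * y ^ (n + 1 - 1) / (((n + 1)! : ℝ) * ((n + 1 + k)! : ℝ) ^ 2) =
      y ^ n / ((n ! : ℝ) * ((n + (k + 1))! : ℝ) ^ 2) := by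
  have h : n + 1 + k = n + (k + 1) := by ring
  have h1 : (n ! : ℝ) ≠ 0 := by exact_mod_cast n.factorial_ne_zero
  have h2 : ((n + (k + 1))! : ℝ) ≠ 0 := by exact_mod_cast (n + (k + 1)).factorial_ne_zero
  have h3 : (n : ℝ) + 1 ≠ 0 := by positivity
  rw [h, Nat.factorial_succ n, Nat.add_sub_cancel]
  push_cast
  field_simp

lemma hasDerivAt_alphaD (k : ℕ) (x : ℝ) : HasDerivAt (alphaD k) (alphaD (k + 1) x) x := by
  have hx : x ∈ Metric.ball (0 : ℝ) (|x| + 1) := by simp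
  -- Dominating series on the ball: the termwise derivative evaluated at the radius.
  have hu : Summable fun n : ℕ => (n : ℝ) * (|x| + 1) ^ (n - 1) /
      ((n ! : ℝ) * ((n + k)! : ℝ) ^ 2) := by
    rw [← summable_nat_add_iff 1]
    simp only [alphaD_deriv_term_succ]
    exact summable_alphaD_term (k + 1) _
  have key := hasDerivAt_tsum_of_isPreconnected hu Metric.isOpen_ball
    (convex_ball (0 : ℝ) (|x| + 1)).isPreconnected
    (g := fun n y => y ^ n / ((n ! : ℝ) * ((n + k)! : ℝ) ^ 2))
    (g' := fun n y => (n : ℝ) * y ^ (n - 1) / ((n ! : ℝ) * ((n + k)! : ℝ) ^ 2))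
    (fun n y _ => (hasDerivAt_pow n y).div_const _)
    (fun n y hy => by
      have hy' : |y| ≤ |x| + 1 := by simpa using (mem_ball_zero_iff.mp hy).le
      rw [Real.norm_eq_abs, abs_div, abs_mul, abs_pow, Nat.abs_cast,
        abs_of_nonneg (by positivity : 0 ≤ (n ! : ℝ) * ((n + k)! : ℝ) ^ 2)]
      gcongr)
    hx (summable_alphaD_term k x) hx
  have hs : HasSum (fun n : ℕ => (n : ℝ) * x ^ (n - 1) / ((n ! : ℝ) * ((n + k)! : ℝ) ^ 2))
      (alphaD (k + 1) x) := by
    rw [← hasSum_nat_add_iff' 1]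
    simp only [alphaD_deriv_term_succ]
    simpa using hasSum_alphaD (k + 1) x
  rw [hs.tsum_eq] at key
  exact key

lemma deriv_alphaD (k : ℕ) : deriv (alphaD k) = alphaD (k + 1) :=
  funext fun x => (hasDerivAt_alphaD k x).deriv

lemma hasSum_mul_alphaD_two (x : ℝ) :
    HasSum (fun n : ℕ => (n : ℝ) * (x ^ n / ((n ! : ℝ) * ((n + 1)! : ℝ) ^ 2)))
      (x * alphaD 2 x) := by
  rw [← hasSum_nat_add_iff' 1]
  simp only [Finset.sum_range_one, Nat.cast_zero, zero_mul, sub_zero]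
  refine ((hasSum_alphaD 2 x).mul_left x).congr_fun fun n => ?_
  have h1 : (n ! : ℝ) ≠ 0 := by exact_mod_cast n.factorial_ne_zero
  have h2 : ((n + 2)! : ℝ) ≠ 0 := by exact_mod_cast (n + 2).factorial_ne_zero
  have h3 : (n : ℝ) + 1 ≠ 0 := by positivity
  rw [show n + 1 + 1 = n + 2 from rfl, Nat.factorial_succ n]
  push_cast
  field_simp
  ring

lemma hasSum_sq_mul_alphaD_three (x : ℝ) :
    HasSum (fun n : ℕ => (n : ℝ) * (n - 1) * (x ^ n / ((n ! : ℝ) * ((n + 1)! : ℝ) ^ 2)))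
      (x ^ 2 * alphaD 3 x) := by
  rw [← hasSum_nat_add_iff' 2]
  simp only [Finset.sum_range_succ, Finset.sum_range_zero, Nat.cast_zero, Nat.cast_one, zero_mul,
    sub_self, mul_zero, add_zero, sub_zero]
  refine ((hasSum_alphaD 3 x).mul_left (x ^ 2)).congr_fun fun n => ?_
  have h1 : (n ! : ℝ) ≠ 0 := by exact_mod_cast n.factorial_ne_zero
  have h2 : ((n + 3)! : ℝ) ≠ 0 := by exact_mod_cast (n + 3).factorial_ne_zero
  have h3 : (n : ℝ) + 1 ≠ 0 := by positivity
  have h4 : (n : ℝ) + 2 ≠ 0 := by positivity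
  have h5 : ((n + 2)! : ℝ) = (n + 2) * ((n + 1) * n !) := by
    rw [Nat.factorial_succ (n + 1), Nat.factorial_succ n]
    push_cast
    ring
  rw [show n + 2 + 1 = n + 3 from rfl, h5]
  push_cast
  field_simp
  ring

/-- `y(x) = ∑ xⁿ/(n!)³` satisfies `x² y''' + 3x y'' + y' - y = 0`. -/
theorem alpha_three_ode (x : ℝ) :
    x ^ 2 * deriv (deriv (deriv (fun x : ℝ => ∑' n : ℕ, x ^ n / (n ! : ℝ) ^ 3))) x +
        3 * x * deriv (deriv (fun x : ℝ => ∑' n : ℕ, x ^ n / (n ! : ℝ) ^ 3)) x +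
        deriv (fun x : ℝ => ∑' n : ℕ, x ^ n / (n ! : ℝ) ^ 3) x -
        (∑' n : ℕ, x ^ n / (n ! : ℝ) ^ 3) = 0 := by
  have h0 : (fun x : ℝ => ∑' n : ℕ, x ^ n / (n ! : ℝ) ^ 3) = alphaD 0 := by
    funext x
    refine tsum_congr fun n => ?_
    rw [Nat.add_zero, show (n ! : ℝ) ^ 3 = n ! * (n ! : ℝ) ^ 2 by ring]
  have h0x : (∑' n : ℕ, x ^ n / (n ! : ℝ) ^ 3) = alphaD 0 x := congrFun h0 x
  rw [h0x, h0]
  simp only [deriv_alphaD, Nat.zero_add, Nat.reduceAdd]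
  have hsum := (((hasSum_sq_mul_alphaD_three x).add
    ((hasSum_mul_alphaD_two x).mul_left 3)).add (hasSum_alphaD 1 x)).sub (hasSum_alphaD 0 x)
  have hz : x ^ 2 * alphaD 3 x + 3 * (x * alphaD 2 x) + alphaD 1 x - alphaD 0 x = 0 := by
    refine hsum.unique (hasSum_zero.congr_fun fun n => ?_)
    have h1 : (n ! : ℝ) ≠ 0 := by exact_mod_cast n.factorial_ne_zero
    have h3 : (n : ℝ) + 1 ≠ 0 := by positivity
    simp only [Nat.add_zero, Nat.factorial_succ n]
    push_cast
    field_simp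
    ring
  linarith
end
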